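/- Let 𝒯 be a ℤ/m-graded triangulated category (1 ≤ m ≤ ∞), R a commutative ring acting centrally on 𝒯, G an object, and M = Hom^•(G, G). Suppose r_1, …, r_n ∈ R is an M-regular sequence, and set s = 2^n. Then the Koszul object G⫽(r_1^s, …, r_n^s) does not belong to ⟨G⟩_n. -/

import Mathlib

open CategoryTheory Category Limits Pretriangulated DirectSum

universe v u

namespace RouquierDim

variable {C : Type u} [Category.{v} C] [Preadditive C] [HasZeroObject C]
  [HasShift C ℤ] [∀ n : ℤ, (shiftFunctor C n).Additive] [Pretriangulated C]
  [HasBinaryBiproducts C]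

/-- `Z` is a summand of `K`: there are maps `r : Z ⟶ K`, `k : K ⟶ Z` with `r ≫ k = 𝟙 Z`. -/
def IsSummand (Z K : C) : Prop := ∃ (r : Z ⟶ K) (k : K ⟶ Z), r ≫ k = 𝟙 Z

/-- The subcategory `ℐ * 𝒥`: objects `K` admitting a distinguished triangle
`K₀ ⟶ K ⟶ K₁ ⟶ K₀⟦1⟧` with `K₀ ∈ ℐ` and `K₁ ∈ 𝒥`. -/
def star (I J : Set C) : Set C :=
  {K | ∃ (K₀ K₁ : C) (f : K₀ ⟶ K) (g : K ⟶ K₁) (h : K₁ ⟶ K₀⟦(1 : ℤ)⟧),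
    Triangle.mk f g h ∈ (distTriang C) ∧ K₀ ∈ I ∧ K₁ ∈ J}

/-- Membership in `⟨ℐ⟩`, the smallest strictly full subcategory containing `ℐ` and
closed under finite direct sums, shifts, and summands. -/
inductive angleMem (I : Set C) : C → Prop
  | of {X : C} (hX : X ∈ I) : angleMem I X
  | zero {X : C} (hX : IsZero X) : angleMem I X
  | shift {X : C} (n : ℤ) (hX : angleMem I X) : angleMem I (X⟦n⟧)
  | sum {X Y : C} (hX : angleMem I X) (hY : angleMem I Y) : angleMem I (X ⊞ Y)
  | smd {X Y : C} (h : IsSummand X Y) (hY : angleMem I Y) : angleMem I X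
  | iso {X Y : C} (e : X ≅ Y) (hX : angleMem I X) : angleMem I Y

/-- `⟨ℐ⟩` as a set of objects. -/
def angle (I : Set C) : Set C := {X | angleMem I X}

/-- `⟨ℐ⟩_n` for `n ≥ 1`: `⟨ℐ⟩_1 = ⟨ℐ⟩`, `⟨ℐ⟩_{n+1} = ⟨⟨ℐ⟩_n * ⟨ℐ⟩⟩`. (Value `∅` at `n = 0`.) -/
def angleN (I : Set C) : ℕ → Set C
  | 0 => ∅
  | 1 => angle I
  | (n + 2) => angle (star (angleN I (n + 1)) (angle I))

/-- `G` is a split-generator of the triangulated category `C`: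
`C = ⟨G⟩_n` for some `n ∈ ℕ`. -/
def IsSplitGenerator (G : C) : Prop := ∃ n : ℕ, angleN {G} n = Set.univ

/-- A central action of a commutative ring `R` on the (`ℤ/m`-graded) triangulated
category `C`: a ring homomorphism `φ K : R →+* End K` for every object `K`, natural in `K`
and compatible with the shift. -/
structure CentralAction (R : Type*) [CommRing R] where
  φ : ∀ K : C, R →+* End K
  natural : ∀ {K L : C} (f : K ⟶ L) (r : R), φ K r ≫ f = f ≫ φ L r
  shift_comm : ∀ (K : C) (r : R) (n : ℤ), φ (K⟦n⟧) r = (φ K r)⟦n⟧'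

variable {R : Type*} [CommRing R]

/-- The `R`-module structure on `Hom(X, Y)` induced by a central action:
`r • f = f ≫ φ Y r` (equivalently, `φ X r ≫ f`, by naturality). -/
def CentralAction.homModule (A : CentralAction (C := C) R) (X Y : C) :
    Module R (X ⟶ Y) :=
  Module.compHom (X ⟶ Y) (A.φ Y)

/-- `Hom^•(X, Y) = ⊕_{i ∈ ℤ/m} Hom(X, Σ^i Y)` as an `R`-module, for the `ℤ/m`-graded
triangulated category `C` (`m = 0` encodes `m = ∞`, in which case `ℤ/m = ℤ`), packaged
as an object of `ModuleCat R`. -/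
noncomputable def CentralAction.HomBullet (A : CentralAction (C := C) R) (m : ℕ)
    (X Y : C) : ModuleCat R :=
  letI : ∀ i : ZMod m, Module R (X ⟶ Y⟦(ZMod.cast i : ℤ)⟧) := fun _ => A.homModule _ _
  ModuleCat.of R (⨁ i : ZMod m, (X ⟶ Y⟦(ZMod.cast i : ℤ)⟧))

/-- `K` is a Koszul object `X ⫽ r` of `r : R` on `X`: there is a distinguished triangle
`X ⟶ X ⟶ K ⟶ X⟦1⟧` whose first map is `φ X r`. -/
def CentralAction.IsKoszulObject (A : CentralAction (C := C) R) (r : R) (X K : C) : Prop :=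
  ∃ (g : X ⟶ K) (h : K ⟶ X⟦(1 : ℤ)⟧),
    Triangle.mk (A.φ X r : X ⟶ X) g h ∈ (distTriang C)

/-- `K` is an iterated Koszul object `X ⫽ (r_1, …, r_n)`:
`X ⫽ (r_1, …, r_n) = (X ⫽ r_1) ⫽ (r_2, …, r_n)` (equivalently,
`X ⫽ (r_1, …, r_n) = (X ⫽ (r_1, …, r_{n-1})) ⫽ r_n`). -/
inductive CentralAction.IsIterKoszulObject (A : CentralAction (C := C) R) :
    C → List R → C → Prop
  | nil (X : C) : CentralAction.IsIterKoszulObject A X [] X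
  | cons {X Y K : C} {r : R} {rs : List R} (h₁ : A.IsKoszulObject r X Y)
      (h₂ : CentralAction.IsIterKoszulObject A Y rs K) :
      CentralAction.IsIterKoszulObject A X (r :: rs) K

/-!
A `G`-ghost is a morphism inducing zero on every `Hom(G⟦i⟧, -)`. By the ghost lemma, a composite
of `n` ghosts out of an object of `⟨G⟩_n` vanishes. In a Koszul triangle `X ⟶ X ⟶ Y ⟶ X⟦1⟧` on
`r`, the map `Y ⟶ X⟦1⟧` is a ghost as soon as `r` is regular on every `Hom(G⟦i⟧, X)`, and the
rest of a regular sequence stays regular on `Hom(G⟦i⟧, Y) = Hom(G⟦i⟧, X)/r`. Hence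
`K = G ⫽ (r_1, …, r_n)` carries an `n`-fold ghost composite `q : K ⟶ G⟦n⟧`. Dually,
`Hom(Y, Z⟦1⟧) = Hom(X, Z)/r`, so `q ≫ p⟦n⟧' = 0` forces `p ∈ (r_1, …, r_n) Hom(G, Z)`; for
`p = 𝟙 G` this contradicts regularity, so `q ≠ 0` and `K ∉ ⟨G⟩_n`. Powers of a regular sequence
are regular because of the exact sequences `0 → M/b → M/ab → M/a → 0`.
-/

open RingTheory.Sequence
open scoped Pointwise

section RegularSequence

variable {M N P : Type*} [AddCommGroup M] [Module R M] [AddCommGroup N] [Module R N]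
  [AddCommGroup P] [Module R P]

theorem mem_smul_top_iff {r : R} {x : M} :
    x ∈ (r • ⊤ : Submodule R M) ↔ ∃ y, r • y = x := by
  simp only [Submodule.mem_smul_pointwise_iff_exists, Submodule.mem_top, true_and]

theorem quotSMulTop_map_injective {r : R} {f : M →ₗ[R] N} {g : N →ₗ[R] P}
    (hf : Function.Injective f) (hfg : Function.Exact f g) (hr : IsSMulRegular P r) :
    Function.Injective (QuotSMulTop.map r f) := by
  have hzero : Function.Exact (0 : PUnit →ₗ[R] M) f := (LinearMap.exact_zero_iff_injective _ f).2 hf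
  have hexact := QuotSMulTop.map_first_exact_on_four_term_exact_of_isSMulRegular_last
    hzero hfg hr
  rw [map_zero] at hexact
  exact (LinearMap.exact_zero_iff_injective _ _).1 hexact

theorem isWeaklyRegular_of_shortExact {rs : List R} {f : M →ₗ[R] N} {g : N →ₗ[R] P}
    (hf : Function.Injective f) (hfg : Function.Exact f g) (hg : Function.Surjective g)
    (hM : IsWeaklyRegular M rs) (hP : IsWeaklyRegular P rs) : IsWeaklyRegular N rs := by
  induction rs generalizing M N P with
  | nil => exact .nil R N
  | cons r rs ih =>
    rw [isWeaklyRegular_cons_iff] at hM hP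
    exact .cons
      (isSMulRegular_of_range_eq_ker hf hfg.linearMap_ker_eq.symm hM.1 hP.1)
      (ih (quotSMulTop_map_injective hf hfg hP.1) (QuotSMulTop.map_exact r hfg hg)
        (QuotSMulTop.map_surjective r hg) hM.2 hP.2)

theorem isWeaklyRegular_of_leftInverse {rs : List R} {f : N →ₗ[R] M} {g : M →ₗ[R] N}
    (hgf : g ∘ₗ f = LinearMap.id) (hM : IsWeaklyRegular M rs) : IsWeaklyRegular N rs := by
  induction rs generalizing M N with
  | nil => exact .nil R N
  | cons r rs ih =>
    rw [isWeaklyRegular_cons_iff] at hM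
    have hf : Function.Injective f :=
      Function.LeftInverse.injective (LinearMap.congr_fun hgf)
    refine .cons (hM.1.of_injective f hf) (ih (f := QuotSMulTop.map r f)
      (g := QuotSMulTop.map r g) ?_ hM.2)
    rw [← QuotSMulTop.map_comp, hgf, QuotSMulTop.map_id]

section DirectSum

variable {ι : Type*} {L : ι → Type*} [∀ i, AddCommGroup (L i)] [∀ i, Module R (L i)]

theorem isWeaklyRegular_of_directSum {rs : List R} (h : IsWeaklyRegular (⨁ i, L i) rs) (i : ι) :
    IsWeaklyRegular (L i) rs := by
  classical
  exact isWeaklyRegular_of_leftInverse (f := DirectSum.lof R ι L i)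
    (g := DirectSum.component R ι L i)
    (LinearMap.ext fun x => DirectSum.component.lof_self R i x) h

theorem ideal_smul_top_directSum_eq_top {I : Ideal R}
    (h : ∀ i, I • (⊤ : Submodule R (L i)) = ⊤) : I • (⊤ : Submodule R (⨁ i, L i)) = ⊤ := by
  classical
  refine eq_top_iff.2 (DFinsupp.iSup_range_lsingle.ge.trans (iSup_le fun i => ?_))
  rw [← Submodule.map_top, ← h i, Submodule.map_smul'']
  exact smul_mono_right I le_top

end DirectSum

section Powers

variable (M) (a b : R)

/-- Multiplication by `a` as a map `M/bM → M/abM`. -/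
def quotSMulTopMulLeft : QuotSMulTop b M →ₗ[R] QuotSMulTop (a * b) M :=
  Submodule.mapQ _ _ (LinearMap.lsmul R M a) fun x hx => by
    obtain ⟨y, rfl⟩ := mem_smul_top_iff.1 hx
    exact mem_smul_top_iff.2 ⟨y, mul_smul a b y⟩

/-- The projection `M/abM → M/aM`. -/
def quotSMulTopProj : QuotSMulTop (a * b) M →ₗ[R] QuotSMulTop a M :=
  Submodule.factor fun x hx => by
    obtain ⟨y, rfl⟩ := mem_smul_top_iff.1 hx
    exact mem_smul_top_iff.2 ⟨b • y, (mul_smul a b y).symm⟩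

variable {M a}

theorem quotSMulTopMulLeft_injective (ha : IsSMulRegular M a) :
    Function.Injective (quotSMulTopMulLeft M a b) := by
  rw [injective_iff_map_eq_zero]
  refine (Submodule.Quotient.mk_surjective _).forall.2 fun x hx => ?_
  obtain ⟨y, hy⟩ := mem_smul_top_iff.1 ((Submodule.Quotient.mk_eq_zero _).1 hx)
  refine (Submodule.Quotient.mk_eq_zero _).2 (mem_smul_top_iff.2 ⟨y, ha ?_⟩)
  exact (mul_smul a b y).symm.trans hy

variable (M a)

theorem quotSMulTopMulLeft_exact :
    Function.Exact (quotSMulTopMulLeft M a b) (quotSMulTopProj M a b) := by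
  refine (Submodule.Quotient.mk_surjective _).forall.2 fun x => ⟨fun hx => ?_, ?_⟩
  · obtain ⟨y, rfl⟩ := mem_smul_top_iff.1 ((Submodule.Quotient.mk_eq_zero _).1 hx)
    exact ⟨Submodule.Quotient.mk y, rfl⟩
  · rintro ⟨y', hy⟩
    obtain ⟨y, rfl⟩ := Submodule.Quotient.mk_surjective _ y'
    rw [← hy]
    exact (Submodule.Quotient.mk_eq_zero _).2 (mem_smul_top_iff.2 ⟨y, rfl⟩)

theorem quotSMulTopProj_surjective : Function.Surjective (quotSMulTopProj M a b) :=
  (Submodule.Quotient.mk_surjective _).forall.2 fun x => ⟨Submodule.Quotient.mk x, rfl⟩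

variable {M a b}

theorem isWeaklyRegular_quotSMulTop_mul {rs : List R} (ha : IsSMulRegular M a)
    (hMa : IsWeaklyRegular (QuotSMulTop a M) rs) (hMb : IsWeaklyRegular (QuotSMulTop b M) rs) :
    IsWeaklyRegular (QuotSMulTop (a * b) M) rs :=
  isWeaklyRegular_of_shortExact (quotSMulTopMulLeft_injective b ha)
    (quotSMulTopMulLeft_exact M a b) (quotSMulTopProj_surjective M a b) hMb hMa

theorem isWeaklyRegular_quotSMulTop_pow {rs : List R} (ha : IsSMulRegular M a)
    (hMa : IsWeaklyRegular (QuotSMulTop a M) rs) {s : ℕ} (hs : 0 < s) :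
    IsWeaklyRegular (QuotSMulTop (a ^ s) M) rs := by
  induction s, hs using Nat.le_induction with
  | base => rwa [pow_one]
  | succ s _ ih =>
    rw [pow_succ']
    exact isWeaklyRegular_quotSMulTop_mul ha hMa ih

theorem isWeaklyRegular_map_pow {rs : List R} (h : IsWeaklyRegular M rs) {s : ℕ} (hs : 0 < s) :
    IsWeaklyRegular M (rs.map fun r => r ^ s) := by
  induction rs generalizing M with
  | nil => exact .nil R M
  | cons r rs ih =>
    rw [isWeaklyRegular_cons_iff] at h
    exact .cons (h.1.pow s) (ih (isWeaklyRegular_quotSMulTop_pow h.1 h.2 hs))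

theorem ofList_map_pow_le (rs : List R) {s : ℕ} (hs : 0 < s) :
    Ideal.ofList (rs.map fun r => r ^ s) ≤ Ideal.ofList rs := by
  refine Ideal.span_le.2 fun x hx => ?_
  obtain ⟨r, hr, rfl⟩ := List.mem_map.1 hx
  exact Ideal.pow_mem_of_mem _ (Ideal.subset_span (s := {r | r ∈ rs}) hr) s hs

theorem isRegular_map_pow {rs : List R} (h : IsRegular M rs) {s : ℕ} (hs : 0 < s) :
    IsRegular M (rs.map fun r => r ^ s) where
  toIsWeaklyRegular := isWeaklyRegular_map_pow h.toIsWeaklyRegular hs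
  top_ne_smul htop := h.top_ne_smul <| Eq.symm <| top_unique <|
    htop.le.trans (Submodule.smul_mono_left (ofList_map_pow_le rs hs))

end Powers

section Quotient

variable {r : R} {rs : List R} {f : M →ₗ[R] N}

theorem isWeaklyRegular_of_exact_smul (hrf : Function.Exact (LinearMap.lsmul R M r) f)
    (hf : Function.Surjective f) (h : IsWeaklyRegular M (r :: rs)) : IsWeaklyRegular N rs :=
  have hrange : (r • ⊤ : Submodule R M) = LinearMap.range (LinearMap.lsmul R M r) :=
    Submodule.map_top _
  let quotEquiv : QuotSMulTop r M ≃ₗ[R] N :=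
    (Submodule.quotEquivOfEq _ _ hrange).trans (hrf.linearEquivOfSurjective hf)
  (quotEquiv.isWeaklyRegular_congr rs).1 ((isWeaklyRegular_cons_iff M r rs).1 h).2

theorem mem_ofList_cons_smul_top_of_exact_smul (hrf : Function.Exact (LinearMap.lsmul R M r) f)
    (hf : Function.Surjective f) {x : M} (hx : f x ∈ Ideal.ofList rs • (⊤ : Submodule R N)) :
    x ∈ Ideal.ofList (r :: rs) • (⊤ : Submodule R M) := by
  rw [← LinearMap.range_eq_top.2 hf, ← Submodule.map_top, ← Submodule.map_smul''] at hx
  obtain ⟨y, hy, hyx⟩ := hx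
  obtain ⟨z, hz⟩ := (hrf (x - y)).1 (by rw [map_sub, hyx, sub_self])
  rw [Ideal.ofList_cons_smul, ← sub_add_cancel x y]
  exact Submodule.add_mem_sup (mem_smul_top_iff.2 ⟨z, hz⟩) hy

end Quotient

end RegularSequence

section Ghost

omit [HasZeroObject C] [Pretriangulated C] [HasBinaryBiproducts C]
  [∀ n : ℤ, (shiftFunctor C n).Additive]

/-- The `G`-ghosts: the morphisms inducing zero on `Hom(G⟦i⟧, -)` for every `i`. -/
def ghost (G : C) : MorphismProperty C :=
  fun X _ f => ∀ (i : ℤ) (u : G⟦i⟧ ⟶ X), u ≫ f = 0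

/-- The morphisms that factor as a morphism followed by `n` composable `G`-ghosts; for `n ≥ 1`
these are the `n`-fold composites of `G`-ghosts. -/
def ghostPow (G : C) : ℕ → MorphismProperty C
  | 0 => ⊤
  | n + 1 => fun X Y f =>
      ∃ (Z : C) (a : X ⟶ Z) (b : Z ⟶ Y), ghostPow G n a ∧ ghost G b ∧ a ≫ b = f

/-- The objects on which every `n`-fold composite of `G`-ghosts vanishes. -/
def ghostKilled (G : C) (n : ℕ) : Set C :=
  {X | ∀ ⦃Y : C⦄ (f : X ⟶ Y), ghostPow G n f → f = 0}

variable {G X Y Z : C} {n : ℕ}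

theorem ghost_comp {f : X ⟶ Y} (hf : ghost G f) (g : Y ⟶ Z) : ghost G (f ≫ g) := fun i u => by
  rw [← Category.assoc, hf, zero_comp]

theorem comp_ghostPow (f : X ⟶ Y) {g : Y ⟶ Z} (hg : ghostPow G n g) : ghostPow G n (f ≫ g) := by
  induction n generalizing Z with
  | zero => trivial
  | succ n ih =>
    obtain ⟨V, a, b, ha, hb, rfl⟩ := hg
    exact ⟨V, f ≫ a, b, ih ha, hb, Category.assoc f a b⟩

theorem mem_ghostKilled_of_isSummand (h : IsSummand X Y)
    (hY : Y ∈ ghostKilled G n) : X ∈ ghostKilled G n := fun Z f hf => by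
  obtain ⟨i, p, hip⟩ := h
  rw [← Category.id_comp f, ← hip, Category.assoc, hY _ (comp_ghostPow p hf), comp_zero]

theorem self_mem_ghostKilled_one (G : C) : G ∈ ghostKilled G 1 := by
  rintro Y _ ⟨Z, a, b, -, hb, rfl⟩
  let e : G⟦(0 : ℤ)⟧ ≅ G := (shiftFunctorZero C ℤ).app G
  rw [← cancel_epi e.hom, comp_zero, ← Category.assoc]
  exact hb 0 (e.hom ≫ a)

end Ghost

section GhostShift

omit [HasZeroObject C] [Pretriangulated C] [HasBinaryBiproducts C]

variable {G X Y : C} {n : ℕ}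

theorem ghost_map_shift {f : X ⟶ Y} (hf : ghost G f) (k : ℤ) : ghost G (f⟦k⟧') := fun i u => by
  let e : G⟦i⟧ ≅ G⟦i - k⟧⟦k⟧ := (shiftFunctorAdd' C (i - k) k i (sub_add_cancel i k)).app G
  obtain ⟨v, hv⟩ := (shiftFunctor C k).map_surjective (e.inv ≫ u)
  calc u ≫ f⟦k⟧' = e.hom ≫ (v ≫ f)⟦k⟧' := by
        rw [Functor.map_comp, hv, Category.assoc, e.hom_inv_id_assoc]
    _ = 0 := by rw [hf, Functor.map_zero, comp_zero]

theorem ghostPow_map_shift {f : X ⟶ Y} (hf : ghostPow G n f) (k : ℤ) :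
    ghostPow G n (f⟦k⟧') := by
  induction n generalizing Y with
  | zero => trivial
  | succ n ih =>
    obtain ⟨Z, a, b, ha, hb, rfl⟩ := hf
    exact ⟨Z⟦k⟧, a⟦k⟧', b⟦k⟧', ih ha, ghost_map_shift hb k, (Functor.map_comp _ a b).symm⟩

theorem shift_mem_ghostKilled (hX : X ∈ ghostKilled G n) (k : ℤ) :
    X⟦k⟧ ∈ ghostKilled G n := fun Y f hf => by
  apply (shiftFunctor C (-k)).map_injective
  rw [Functor.map_zero, ← cancel_epi (shiftShiftNeg X k).inv, comp_zero]
  exact hX _ (comp_ghostPow _ (ghostPow_map_shift hf (-k)))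

end GhostShift

section GhostLemma

omit [HasZeroObject C] [Pretriangulated C] in
theorem angle_subset_ghostKilled {G : C} {n : ℕ} {I : Set C} (hI : I ⊆ ghostKilled G n) :
    angle I ⊆ ghostKilled G n := by
  intro X hX
  induction hX with
  | of hX => exact hI hX
  | zero hX => exact fun Y f _ => hX.eq_of_src f 0
  | shift k _ ih => exact shift_mem_ghostKilled ih k
  | sum _ _ ihX ihY =>
    refine fun Z f hf => biprod.hom_ext' _ _ ?_ ?_
    · rw [ihX _ (comp_ghostPow _ hf), comp_zero]
    · rw [ihY _ (comp_ghostPow _ hf), comp_zero]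
  | smd h _ ih => exact mem_ghostKilled_of_isSummand h ih
  | iso e _ ih => exact mem_ghostKilled_of_isSummand ⟨e.inv, e.hom, e.inv_hom_id⟩ ih

omit [HasBinaryBiproducts C] in
theorem star_subset_ghostKilled {G : C} {n : ℕ} {I J : Set C} (hI : I ⊆ ghostKilled G n)
    (hJ : J ⊆ ghostKilled G 1) : star I J ⊆ ghostKilled G (n + 1) := by
  rintro K ⟨K₀, K₁, f, g, h, hT, hK₀, hK₁⟩ Y _ ⟨Z, a, b, ha, hb, rfl⟩
  have hfa : f ≫ a = 0 := hI hK₀ _ (comp_ghostPow f ha)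
  obtain ⟨c, rfl⟩ : ∃ c : K₁ ⟶ Z, a = g ≫ c := Triangle.yoneda_exact₂ _ hT a hfa
  have hcb : c ≫ b = 0 := hJ hK₁ _ ⟨Z, c, b, trivial, hb, rfl⟩
  rw [Category.assoc, hcb, comp_zero]

theorem angleN_subset_ghostKilled (G : C) : ∀ n, angleN {G} n ⊆ ghostKilled G n
  | 0 => Set.empty_subset _
  | 1 => angle_subset_ghostKilled (Set.singleton_subset_iff.2 (self_mem_ghostKilled_one G))
  | n + 2 => angle_subset_ghostKilled <|
      star_subset_ghostKilled (angleN_subset_ghostKilled G (n + 1)) (angleN_subset_ghostKilled G 1)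

end GhostLemma

section LinearHom

omit [HasZeroObject C] [Pretriangulated C] [HasBinaryBiproducts C]

variable [Linear R C] {rs : List R}

section

omit [HasShift C ℤ] [∀ n : ℤ, (shiftFunctor C n).Additive]

theorem ideal_smul_top_hom_eq_top {X : C} {I : Ideal R}
    (h : 𝟙 X ∈ I • (⊤ : Submodule R (X ⟶ X))) (Y : C) : I • (⊤ : Submodule R (X ⟶ Y)) = ⊤ := by
  refine Submodule.eq_top_iff'.2 fun f => ?_
  have hf := Submodule.mem_map_of_mem (f := Linear.rightComp R X f) h
  rw [Submodule.map_smul'', Linear.rightComp_apply, Category.id_comp] at hf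
  exact Submodule.smul_mono le_rfl le_top hf

theorem isWeaklyRegular_hom_congr {X X' Y Y' : C} (e : X ≅ X') (e' : Y ≅ Y')
    (h : IsWeaklyRegular (X ⟶ Y) rs) : IsWeaklyRegular (X' ⟶ Y') rs :=
  ((Linear.homCongr R e e').isWeaklyRegular_congr rs).1 h

end

variable [∀ n : ℤ, (shiftFunctor C n).Linear R]

theorem isWeaklyRegular_shift_hom_shift {X Y : C} {a b n : ℤ} (hab : a + n = b)
    (h : IsWeaklyRegular (X⟦a⟧ ⟶ Y) rs) : IsWeaklyRegular (X⟦b⟧ ⟶ Y⟦n⟧) rs :=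
  let shiftEquiv : (X⟦a⟧ ⟶ Y) ≃ₗ[R] (X⟦a⟧⟦n⟧ ⟶ Y⟦n⟧) :=
    LinearEquiv.ofBijective ((shiftFunctor C n).mapLinearMap R)
      ((Functor.FullyFaithful.ofFullyFaithful (shiftFunctor C n)).map_bijective _ _)
  isWeaklyRegular_hom_congr ((shiftFunctorAdd' C a n b hab).app X).symm (Iso.refl _) <|
    (shiftEquiv.isWeaklyRegular_congr rs).1 h

theorem isWeaklyRegular_shift_hom {X Y : C} {i : ℤ} (h : IsWeaklyRegular (X ⟶ Y⟦-i⟧) rs) :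
    IsWeaklyRegular (X⟦i⟧ ⟶ Y) rs := by
  have h_zero : IsWeaklyRegular (X⟦(0 : ℤ)⟧ ⟶ Y⟦-i⟧) rs :=
    isWeaklyRegular_hom_congr ((shiftFunctorZero C ℤ).symm.app X) (Iso.refl _) h
  exact isWeaklyRegular_hom_congr (Iso.refl _) (shiftNegShift Y i)
    (isWeaklyRegular_shift_hom_shift (zero_add i) h_zero)

theorem isSMulRegular_shift_hom_shift {G X : C} {r : R}
    (hr : ∀ i : ℤ, IsSMulRegular (G⟦i⟧ ⟶ X) r) (i n : ℤ) :
    IsSMulRegular (G⟦i⟧ ⟶ X⟦n⟧) r :=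
  (isWeaklyRegular_singleton_iff _ r).1 <| isWeaklyRegular_shift_hom_shift (sub_add_cancel i n) <|
    (isWeaklyRegular_singleton_iff _ r).2 (hr (i - n))

end LinearHom

section KoszulTriangle

omit [HasBinaryBiproducts C]

variable [Linear R C] {r : R} {rs : List R} {X Y : C} {g : X ⟶ Y} {h : Y ⟶ X⟦(1 : ℤ)⟧}

theorem lsmul_rightComp_exact (hT : Triangle.mk (r • 𝟙 X) g h ∈ distTriang C) (W : C) :
    Function.Exact (LinearMap.lsmul R (W ⟶ X) r) (Linear.rightComp R W g) := by
  refine fun u => ⟨fun hu => ?_, ?_⟩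
  · obtain ⟨v, hv⟩ : ∃ v : W ⟶ X, u = v ≫ (r • 𝟙 X) := Triangle.coyoneda_exact₂ _ hT u hu
    exact ⟨v, by simp [hv]⟩
  · rintro ⟨v, rfl⟩
    have hrg : (r • 𝟙 X) ≫ g = 0 := comp_distTriang_mor_zero₁₂ _ hT
    simpa using v ≫= hrg

variable [∀ n : ℤ, (shiftFunctor C n).Linear R]

theorem comp_mor₃_eq_zero (hT : Triangle.mk (r • 𝟙 X) g h ∈ distTriang C) {W : C}
    (hr : IsSMulRegular (W ⟶ X⟦(1 : ℤ)⟧) r) (u : W ⟶ Y) : u ≫ h = 0 := by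
  have hhr : h ≫ (r • 𝟙 X)⟦(1 : ℤ)⟧' = 0 := comp_distTriang_mor_zero₃₁ _ hT
  refine hr.right_eq_zero_of_smul ?_
  simpa using u ≫= hhr

theorem rightComp_surjective (hT : Triangle.mk (r • 𝟙 X) g h ∈ distTriang C) {W : C}
    (hr : IsSMulRegular (W ⟶ X⟦(1 : ℤ)⟧) r) :
    Function.Surjective (Linear.rightComp R W g) := fun u => by
  obtain ⟨v, hv⟩ : ∃ v : W ⟶ X, u = v ≫ g :=
    Triangle.coyoneda_exact₃ _ hT u (comp_mor₃_eq_zero hT hr u)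
  exact ⟨v, hv.symm⟩

variable (R) in
/-- The map `Hom(X, V) → Hom(Y, V⟦1⟧)` induced by `h : Y ⟶ X⟦1⟧`. -/
def shiftLeftComp (h : Y ⟶ X⟦(1 : ℤ)⟧) (V : C) : (X ⟶ V) →ₗ[R] (Y ⟶ V⟦(1 : ℤ)⟧) :=
  Linear.leftComp R _ h ∘ₗ (shiftFunctor C (1 : ℤ)).mapLinearMap R

theorem lsmul_shiftLeftComp_exact (hT : Triangle.mk (r • 𝟙 X) g h ∈ distTriang C) (V : C) :
    Function.Exact (LinearMap.lsmul R (X ⟶ V) r) (shiftLeftComp R h V) := by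
  refine fun p => ⟨fun hp => ?_, ?_⟩
  · obtain ⟨w, hw⟩ : ∃ w : X⟦(1 : ℤ)⟧ ⟶ V⟦(1 : ℤ)⟧, p⟦1⟧' = (-(r • 𝟙 X)⟦1⟧') ≫ w :=
      Triangle.yoneda_exact₃ _ (rot_of_distTriang _ hT) (p⟦1⟧') hp
    obtain ⟨v, rfl⟩ := (shiftFunctor C (1 : ℤ)).map_surjective w
    refine ⟨-v, (shiftFunctor C (1 : ℤ)).map_injective ?_⟩
    simp [hw]
  · rintro ⟨v, rfl⟩
    have hhr : h ≫ (r • 𝟙 X)⟦(1 : ℤ)⟧' = 0 := comp_distTriang_mor_zero₃₁ _ hT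
    simpa [shiftLeftComp] using hhr =≫ v⟦1⟧'

theorem shiftLeftComp_surjective (hT : Triangle.mk (r • 𝟙 X) g h ∈ distTriang C) {V : C}
    (hr : IsSMulRegular (X ⟶ V⟦(1 : ℤ)⟧) r) :
    Function.Surjective (shiftLeftComp R h V) := fun u => by
  have hrg : (r • 𝟙 X) ≫ g = 0 := comp_distTriang_mor_zero₁₂ _ hT
  have hgu : g ≫ u = 0 := hr.right_eq_zero_of_smul (by simpa using hrg =≫ u)
  obtain ⟨w, hw⟩ : ∃ w : X⟦(1 : ℤ)⟧ ⟶ V⟦(1 : ℤ)⟧, u = h ≫ w := Triangle.yoneda_exact₃ _ hT u hgu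
  obtain ⟨v, rfl⟩ := (shiftFunctor C (1 : ℤ)).map_surjective w
  exact ⟨v, hw.symm⟩

theorem ghost_mor₃ (hT : Triangle.mk (r • 𝟙 X) g h ∈ distTriang C) {G : C}
    (hr : ∀ i : ℤ, IsSMulRegular (G⟦i⟧ ⟶ X) r) : ghost G h :=
  fun i u => comp_mor₃_eq_zero hT (isSMulRegular_shift_hom_shift hr i 1) u

theorem isWeaklyRegular_shift_hom_cone (hT : Triangle.mk (r • 𝟙 X) g h ∈ distTriang C) {G : C}
    (hG : ∀ i : ℤ, IsWeaklyRegular (G⟦i⟧ ⟶ X) (r :: rs)) (i : ℤ) :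
    IsWeaklyRegular (G⟦i⟧ ⟶ Y) rs := by
  have hr (i : ℤ) : IsSMulRegular (G⟦i⟧ ⟶ X) r := ((isWeaklyRegular_cons_iff _ r rs).1 (hG i)).1
  exact isWeaklyRegular_of_exact_smul (lsmul_rightComp_exact hT _)
    (rightComp_surjective hT (isSMulRegular_shift_hom_shift hr i 1)) (hG i)

theorem isWeaklyRegular_cone_hom_shift (hT : Triangle.mk (r • 𝟙 X) g h ∈ distTriang C) {Z : C}
    (hZ : ∀ i : ℤ, IsWeaklyRegular (X ⟶ Z⟦i⟧) (r :: rs)) (i : ℤ) :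
    IsWeaklyRegular (Y ⟶ Z⟦(1 : ℤ)⟧⟦i⟧) rs := by
  have hreg : IsWeaklyRegular (X ⟶ Z⟦i⟧⟦(1 : ℤ)⟧) (r :: rs) :=
    isWeaklyRegular_hom_congr (Iso.refl X) ((shiftFunctorAdd C i 1).app Z) (hZ (i + 1))
  exact isWeaklyRegular_hom_congr (Iso.refl Y) (shiftComm Z i 1) <|
    isWeaklyRegular_of_exact_smul (lsmul_shiftLeftComp_exact hT _)
      (shiftLeftComp_surjective hT ((isWeaklyRegular_cons_iff _ r rs).1 hreg).1) (hZ i)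

end KoszulTriangle

section IteratedKoszul

omit [HasBinaryBiproducts C]

variable [Linear R C] [∀ n : ℤ, (shiftFunctor C n).Linear R]

theorem exists_ghostPow_of_isIterKoszulObject {A : CentralAction (C := C) R}
    (hA : ∀ (X : C) (r : R), A.φ X r = r • 𝟙 X) {G X K : C} {rs : List R}
    (hK : A.IsIterKoszulObject X rs K) (hG : ∀ i : ℤ, IsWeaklyRegular (G⟦i⟧ ⟶ X) rs) :
    ∃ q : K ⟶ X⟦(rs.length : ℤ)⟧, ghostPow G rs.length q ∧
      ∀ Z : C, (∀ i : ℤ, IsWeaklyRegular (X ⟶ Z⟦i⟧) rs) → ∀ p : X ⟶ Z,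
        q ≫ p⟦(rs.length : ℤ)⟧' = 0 → p ∈ Ideal.ofList rs • (⊤ : Submodule R (X ⟶ Z)) := by
  induction hK with
  | nil X =>
    let e := shiftFunctorZero' C (([] : List R).length : ℤ) Nat.cast_zero
    refine ⟨e.inv.app X, trivial, fun Z _ p hp => ?_⟩
    have hpe : p ≫ e.inv.app Z = 0 := (e.inv.naturality p).trans hp
    obtain rfl : p = 0 := (cancel_mono (e.inv.app Z)).1 (hpe.trans zero_comp.symm)
    exact Submodule.zero_mem _
  | @cons X Y K r rs hXY _ ih =>
    obtain ⟨g, h, hT⟩ := hXY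
    rw [hA] at hT
    obtain ⟨q, hq, hq_mem⟩ := ih (isWeaklyRegular_shift_hom_cone hT hG)
    let e := shiftFunctorAdd' C 1 (rs.length : ℤ) ((r :: rs).length : ℤ)
      (by rw [List.length_cons]; push_cast; ring)
    refine ⟨q ≫ h⟦_⟧' ≫ e.inv.app X, ⟨_, q, _, hq, ?_, rfl⟩, fun Z hZ p hp => ?_⟩
    · have hr (i : ℤ) : IsSMulRegular (G⟦i⟧ ⟶ X) r :=
        ((isWeaklyRegular_cons_iff _ r rs).1 (hG i)).1
      exact ghost_comp (ghost_map_shift (ghost_mor₃ hT hr) _) _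
    · have hqp : q ≫ (shiftLeftComp R h Z p)⟦(rs.length : ℤ)⟧' = 0 := by
        rw [← cancel_mono (e.inv.app Z), zero_comp, ← hp]
        simpa [shiftLeftComp] using q ≫= h⟦(rs.length : ℤ)⟧' ≫= e.inv.naturality p
      exact mem_ofList_cons_smul_top_of_exact_smul (lsmul_shiftLeftComp_exact hT Z)
        (shiftLeftComp_surjective hT ((isWeaklyRegular_cons_iff _ r rs).1 (hZ 1)).1)
        (hq_mem _ (isWeaklyRegular_cone_hom_shift hT hZ) _ hqp)

end IteratedKoszul

section Periodicity

omit [Preadditive C] [HasZeroObject C] [∀ n : ℤ, (shiftFunctor C n).Additive] [Pretriangulated C]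
  [HasBinaryBiproducts C]

theorem nonempty_shift_mul_iso {a : ℤ} (e : shiftFunctor C a ≅ 𝟭 C) (X : C) (k : ℤ) :
    Nonempty (X⟦a * k⟧ ≅ X) := by
  induction k with
  | zero => exact ⟨(shiftFunctorZero' C (a * 0) (mul_zero a)).app X⟩
  | succ k ih =>
    exact ⟨(shiftFunctorAdd' C (a * k) a _ (mul_add_one a _).symm).app X ≪≫ e.app _ ≪≫ ih.some⟩
  | pred k ih =>
    have hk : a * (-k - 1) + a = a * -k := by ring
    exact ⟨(e.app _).symm ≪≫ ((shiftFunctorAdd' C _ a _ hk).app X).symm ≪≫ ih.some⟩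

theorem nonempty_shift_zmodCast_iso {m : ℕ} (e : shiftFunctor C (m : ℤ) ≅ 𝟭 C) (X : C) (j : ℤ) :
    Nonempty (X⟦((j : ZMod m).cast : ℤ)⟧ ≅ X⟦j⟧) := by
  obtain ⟨k, hk⟩ : (m : ℤ) ∣ j - (j : ZMod m).cast :=
    (ZMod.intCast_eq_intCast_iff_dvd_sub _ _ _).1 (ZMod.intCast_zmod_cast _)
  obtain ⟨period⟩ := nonempty_shift_mul_iso e X k
  have hj : (m : ℤ) * k + (j : ZMod m).cast = j := by rw [← hk, sub_add_cancel]
  exact ⟨(shiftFunctor C _).mapIso period.symm ≪≫ ((shiftFunctorAdd' C _ _ j hj).app X).symm⟩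

end Periodicity

section CentralAction

omit [HasZeroObject C] [∀ n : ℤ, (shiftFunctor C n).Additive] [Pretriangulated C]
  [HasBinaryBiproducts C]

/-- The `R`-linear structure on `C` given by a central action of `R`, which makes `φ X r` the
scalar endomorphism `r • 𝟙 X`. -/
@[reducible]
def CentralAction.linear (A : CentralAction (C := C) R) : Linear R C where
  homModule := A.homModule
  smul_comp X Y Z r f g := by
    change (f ≫ A.φ Y r) ≫ g = (f ≫ g) ≫ A.φ Z r
    rw [Category.assoc, A.natural, Category.assoc]
  comp_smul X Y Z f r g := (Category.assoc f g (A.φ Z r)).symm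

theorem CentralAction.φ_eq_smul_id (A : CentralAction (C := C) R) (X : C) (r : R) :
    letI := A.linear
    A.φ X r = r • 𝟙 X :=
  (Category.id_comp (A.φ X r)).symm

theorem CentralAction.shiftFunctor_linear (A : CentralAction (C := C) R) (n : ℤ) :
    letI := A.linear
    (shiftFunctor C n).Linear R :=
  letI := A.linear
  { map_smul := fun {X Y} f r => by
      change (f ≫ A.φ Y r)⟦n⟧' = f⟦n⟧' ≫ A.φ (Y⟦n⟧) r
      rw [A.shift_comm, Functor.map_comp] }

theorem CentralAction.isWeaklyRegular_hom_shift (A : CentralAction (C := C) R) {m : ℕ}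
    (e : shiftFunctor C (m : ℤ) ≅ 𝟭 C) {X Y : C} {rs : List R}
    (h : IsWeaklyRegular (A.HomBullet m X Y) rs) (j : ℤ) :
    letI := A.linear
    IsWeaklyRegular (X ⟶ Y⟦j⟧) rs := by
  let := A.linear
  obtain ⟨e'⟩ := nonempty_shift_zmodCast_iso e Y j
  exact isWeaklyRegular_hom_congr (Iso.refl X) e'
    (isWeaklyRegular_of_directSum (L := fun i : ZMod m => X ⟶ Y⟦(i.cast : ℤ)⟧) h j)

theorem CentralAction.ideal_smul_top_homBullet_eq_top (A : CentralAction (C := C) R) (m : ℕ)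
    {X : C} {I : Ideal R}
    (h : letI := A.linear; 𝟙 X ∈ I • (⊤ : Submodule R (X ⟶ X))) (Y : C) :
    I • (⊤ : Submodule R (A.HomBullet m X Y)) = ⊤ :=
  letI := A.linear
  ideal_smul_top_directSum_eq_top (L := fun i : ZMod m => X ⟶ Y⟦(i.cast : ℤ)⟧)
    fun _ => ideal_smul_top_hom_eq_top h _

end CentralAction

theorem koszulObject_not_mem_angleN_general
    (A : CentralAction (C := C) R) (m : ℕ)
    (hgr : Nonempty (shiftFunctor C (m : ℤ) ≅ 𝟭 C))
    (G : C) (rs : List R)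
    (hreg : IsRegular (A.HomBullet m G G) rs)
    (K : C) (hK : A.IsIterKoszulObject G rs K) :
    K ∉ angleN {G} rs.length := by
  intro hmem
  obtain ⟨e⟩ := hgr
  let := A.linear
  have := A.shiftFunctor_linear
  have hto (i : ℤ) : IsWeaklyRegular (G ⟶ G⟦i⟧) rs :=
    A.isWeaklyRegular_hom_shift e hreg.toIsWeaklyRegular i
  have hfrom (i : ℤ) : IsWeaklyRegular (G⟦i⟧ ⟶ G) rs := isWeaklyRegular_shift_hom (hto (-i))
  obtain ⟨q, hq_ghost, hq_mem⟩ := exists_ghostPow_of_isIterKoszulObject A.φ_eq_smul_id hK hfrom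
  have hq : q = 0 := angleN_subset_ghostKilled G _ hmem q hq_ghost
  have hid : 𝟙 G ∈ Ideal.ofList rs • (⊤ : Submodule R (G ⟶ G)) :=
    hq_mem G hto (𝟙 G) (by rw [hq, zero_comp])
  exact hreg.top_ne_smul (A.ideal_smul_top_homBullet_eq_top m hid G).symm

/-- Let `C` be a `ℤ/m`-graded triangulated category (`1 ≤ m ≤ ∞`; here
`m = 0` encodes `m = ∞`), `R` a commutative ring acting centrally on `C`, `G` an object and
`M = Hom^•(G, G)`. If `r_1, …, r_n ∈ R` is an `M`-regular sequence and `s = 2^n`, then the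
Koszul object `G ⫽ (r_1^s, …, r_n^s)` does not belong to `⟨G⟩_n`. -/
theorem koszulObject_not_mem_angleN
    (A : CentralAction (C := C) R) (m : ℕ)
    (hgr : Nonempty (shiftFunctor C (m : ℤ) ≅ 𝟭 C))
    (G : C) (rs : List R)
    (hreg : RingTheory.Sequence.IsRegular (A.HomBullet m G G) rs)
    (K : C) (hK : A.IsIterKoszulObject G (rs.map fun r => r ^ (2 ^ rs.length)) K) :
    K ∉ angleN {G} rs.length := by
  simpa only [List.length_map] using koszulObject_not_mem_angleN_general A m hgr G _
    (isRegular_map_pow hreg (Nat.two_pow_pos rs.length)) K hK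

end RouquierDim
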